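/- Let K : [0,T]×Ω → S(ℝᵐ) be a bounded, 𝔽-progressively measurable symmetric-matrix-valued process. If E∫_0^T ⟨K(r)v(r), v(r)⟩ dr ≥ 0 for every v ∈ L²_𝔽(0,T;ℝᵐ), then K(t,ω) is positive semidefinite for a.e. (t,ω) ∈ [0,T]×Ω. -/

import Mathlib

/-!
The proof avoids any measurable selection of eigenvectors. For a fixed vector `q`, the process
`v = q` on `{⟨K q, q⟩ < 0}` and `v = 0` elsewhere is bounded, adapted and jointly measurable, and
`⟨K v, v⟩ = min ⟨K q, q⟩ 0`. Since the latter is nonpositive with nonnegative integral over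
`[0,T] × Ω`, it vanishes a.e., so `⟨K q, q⟩ ≥ 0` a.e. (`ae_quadForm_nonneg`). Intersecting the
exceptional null sets over the countably many rational `q` and using density of the rational
vectors (`posSemidef_of_rat`) gives positive semidefiniteness a.e.
-/

open MeasureTheory ProbabilityTheory Filter Set Matrix

noncomputable section

namespace SLQ

variable {Ω : Type} {mΩ : MeasurableSpace Ω}

/-- Squared Euclidean norm of a vector. -/
def enorm2 {k : ℕ} (v : Fin k → ℝ) : ℝ := ∑ i, (v i) ^ 2

/-- Squared Frobenius norm of a matrix. -/
def frob2 {k l : ℕ} (M : Matrix (Fin k) (Fin l) ℝ) : ℝ := ∑ i, ∑ j, (M i j) ^ 2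

/-- The martingale property on the time interval `[s,T]`. -/
def MartOn (μ : Measure Ω) (F : Filtration ℝ mΩ) (s T : ℝ) (M : ℝ → Ω → ℝ) : Prop :=
  (∀ t ∈ Icc s T, Measurable[F t] (M t)) ∧
  (∀ t ∈ Icc s T, Integrable (M t) μ) ∧
  ∀ t₁ t₂, s ≤ t₁ → t₁ ≤ t₂ → t₂ ≤ T → μ[M t₂ | F t₁] =ᵐ[μ] M t₁

/-- `W` is a standard one-dimensional Brownian motion and `F` is its natural filtration. -/
structure IsBrownian (μ : Measure Ω) (F : Filtration ℝ mΩ) (W : ℝ → Ω → ℝ) : Prop where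
  meas : ∀ t, Measurable[F t] (W t)
  cont : ∀ᵐ ω ∂μ, Continuous fun t => W t ω
  start : ∀ᵐ ω ∂μ, W 0 ω = 0
  gauss : ∀ s t : ℝ, 0 ≤ s → s ≤ t →
    Measure.map (fun ω => W t ω - W s ω) μ = gaussianReal 0 (Real.toNNReal (t - s))
  indep : ∀ s t : ℝ, 0 ≤ s → s ≤ t →
    Indep (MeasurableSpace.comap (fun ω => W t ω - W s ω) (borel ℝ)) (F s) μ
  natural : ∀ t : ℝ, 0 ≤ t →
    F t = ⨆ s ∈ Icc (0:ℝ) t, MeasurableSpace.comap (fun ω => W s ω) (borel ℝ)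

/-- `M = ∫_s^· φ dW` on `[s,T]`: `M` is a continuous square-integrable martingale starting from `0`
at time `s`, whose quadratic variation is `∫_s^· φ² dr` and whose covariation with `W` is
`∫_s^· φ dr`.  This characterizes the Itô integral of `φ` with respect to `W`. -/
def IsItoInt (μ : Measure Ω) (F : Filtration ℝ mΩ) (W : ℝ → Ω → ℝ) (s T : ℝ)
    (φ M : ℝ → Ω → ℝ) : Prop :=
  (∀ᵐ ω ∂μ, M s ω = 0) ∧
  (∀ᵐ ω ∂μ, ContinuousOn (fun t => M t ω) (Icc s T)) ∧
  MartOn μ F s T M ∧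
  MartOn μ F s T (fun t ω => M t ω * W t ω - ∫ r in s..t, φ r ω) ∧
  MartOn μ F s T (fun t ω => (M t ω) ^ 2 - ∫ r in s..t, (φ r ω) ^ 2)

/-- Componentwise Itô integral for `ℝᵏ`-valued integrands. -/
def IsItoIntVec {k : ℕ} (μ : Measure Ω) (F : Filtration ℝ mΩ) (W : ℝ → Ω → ℝ) (s T : ℝ)
    (φ M : ℝ → Ω → Fin k → ℝ) : Prop :=
  ∀ i, IsItoInt μ F W s T (fun t ω => φ t ω i) (fun t ω => M t ω i)

/-- `x` is a solution of the SDE `dx = b dt + σ dW` on `[s,T]` with `x(s) = η`. -/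
def SolvesSDE {k : ℕ} (μ : Measure Ω) (F : Filtration ℝ mΩ) (W : ℝ → Ω → ℝ) (s T : ℝ)
    (b σ : ℝ → Ω → Fin k → ℝ) (η : Ω → Fin k → ℝ) (x : ℝ → Ω → Fin k → ℝ) : Prop :=
  (∀ t ∈ Icc s T, ∀ i, Measurable[F t] fun ω => x t ω i) ∧
  (∀ᵐ ω ∂μ, ContinuousOn (fun t => x t ω) (Icc s T)) ∧
  (∀ᵐ ω ∂μ, IntegrableOn (fun r => b r ω) (Icc s T)) ∧
  ∃ M : ℝ → Ω → Fin k → ℝ, IsItoIntVec μ F W s T σ M ∧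
    ∀ᵐ ω ∂μ, ∀ t ∈ Icc s T, x t ω = η ω + (∫ r in s..t, b r ω) + M t ω

/-- `(y,z)` is a solution of the BSDE `dy = f dt + z dW` on `[s,T]` with `y(T) = ξ`. -/
def SolvesBSDE {k : ℕ} (μ : Measure Ω) (F : Filtration ℝ mΩ) (W : ℝ → Ω → ℝ) (s T : ℝ)
    (f : ℝ → Ω → Fin k → ℝ) (ξ : Ω → Fin k → ℝ) (y z : ℝ → Ω → Fin k → ℝ) : Prop :=
  (∀ t ∈ Icc s T, ∀ i, Measurable[F t] fun ω => y t ω i) ∧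
  (∀ t ∈ Icc s T, ∀ i, Measurable[F t] fun ω => z t ω i) ∧
  (∀ᵐ ω ∂μ, ContinuousOn (fun t => y t ω) (Icc s T)) ∧
  (∀ᵐ ω ∂μ, IntegrableOn (fun r => f r ω) (Icc s T)) ∧
  ∃ M : ℝ → Ω → Fin k → ℝ, IsItoIntVec μ F W s T z M ∧
    ∀ᵐ ω ∂μ, ∀ t ∈ Icc s T, y t ω = ξ ω - (∫ r in t..T, f r ω) - (M T ω - M t ω)

/-! ### Spaces of processes -/

/-- `φ ∈ L^∞_𝔽(Ω; L¹(a,b; ℝ^{k×l}))`. -/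
def MatMemLinfL1 {k l : ℕ} (μ : Measure Ω) (F : Filtration ℝ mΩ) (a b : ℝ)
    (φ : ℝ → Ω → Matrix (Fin k) (Fin l) ℝ) : Prop :=
  (∀ t i j, Measurable[F t] fun ω => φ t ω i j) ∧
  (∀ i j, Measurable fun p : ℝ × Ω => φ p.1 p.2 i j) ∧
  ∃ c : ℝ, ∀ᵐ ω ∂μ, (∀ i j, IntegrableOn (fun r => φ r ω i j) (Icc a b)) ∧
    (∫ r in a..b, Real.sqrt (frob2 (φ r ω))) ≤ c

/-- `φ ∈ L^∞_𝔽(Ω; L²(a,b; ℝ^{k×l}))`. -/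
def MatMemLinfL2 {k l : ℕ} (μ : Measure Ω) (F : Filtration ℝ mΩ) (a b : ℝ)
    (φ : ℝ → Ω → Matrix (Fin k) (Fin l) ℝ) : Prop :=
  (∀ t i j, Measurable[F t] fun ω => φ t ω i j) ∧
  (∀ i j, Measurable fun p : ℝ × Ω => φ p.1 p.2 i j) ∧
  ∃ c : ℝ, ∀ᵐ ω ∂μ, (IntegrableOn (fun r => frob2 (φ r ω)) (Icc a b)) ∧
    (∫ r in a..b, frob2 (φ r ω)) ≤ c

/-- `φ ∈ L^∞_𝔽(a,b; ℝ^{k×l})` (essentially bounded in `(t,ω)`). -/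
def MatMemLinfLinf {k l : ℕ} (μ : Measure Ω) (F : Filtration ℝ mΩ) (a b : ℝ)
    (φ : ℝ → Ω → Matrix (Fin k) (Fin l) ℝ) : Prop :=
  (∀ t i j, Measurable[F t] fun ω => φ t ω i j) ∧
  (∀ i j, Measurable fun p : ℝ × Ω => φ p.1 p.2 i j) ∧
  ∃ c : ℝ, ∀ᵐ p ∂(((volume : Measure ℝ).restrict (Icc a b)).prod μ), frob2 (φ p.1 p.2) ≤ c

/-- `Λ ∈ L^p_𝔽(Ω; L²(a,b; ℝ^{k×l}))` for all `p ≥ 1`. -/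
def MatMemLpAllL2 {k l : ℕ} (μ : Measure Ω) (F : Filtration ℝ mΩ) (a b : ℝ)
    (φ : ℝ → Ω → Matrix (Fin k) (Fin l) ℝ) : Prop :=
  (∀ t i j, Measurable[F t] fun ω => φ t ω i j) ∧
  (∀ i j, Measurable fun p : ℝ × Ω => φ p.1 p.2 i j) ∧
  (∀ᵐ ω ∂μ, IntegrableOn (fun r => frob2 (φ r ω)) (Icc a b)) ∧
  ∀ p : ℝ, 1 ≤ p →
    (∫⁻ ω, ENNReal.ofReal ((∫ r in a..b, frob2 (φ r ω)) ^ (p / 2)) ∂μ) < ⊤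

/-- `P ∈ L^∞_𝔽(Ω; C([a,b]; ℝ^{k×k}))`. -/
def MatMemLinfC {k : ℕ} (μ : Measure Ω) (F : Filtration ℝ mΩ) (a b : ℝ)
    (φ : ℝ → Ω → Matrix (Fin k) (Fin k) ℝ) : Prop :=
  (∀ t i j, Measurable[F t] fun ω => φ t ω i j) ∧
  (∀ᵐ ω ∂μ, ∀ i j, ContinuousOn (fun t => φ t ω i j) (Icc a b)) ∧
  ∃ c : ℝ, ∀ᵐ ω ∂μ, ∀ t ∈ Icc a b, frob2 (φ t ω) ≤ c

/-- `u ∈ L²_𝔽(s,T; ℝᵏ)`. -/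
def VecMemL2 {k : ℕ} (μ : Measure Ω) (F : Filtration ℝ mΩ) (s T : ℝ)
    (u : ℝ → Ω → Fin k → ℝ) : Prop :=
  (∀ t i, Measurable[F t] fun ω => u t ω i) ∧
  (∀ i, Measurable fun p : ℝ × Ω => u p.1 p.2 i) ∧
  (∫⁻ p, ENNReal.ofReal (enorm2 (u p.1 p.2)) ∂(((volume : Measure ℝ).restrict (Icc s T)).prod μ)) < ⊤

/-- `x ∈ L²_𝔽(Ω; C([s,T]; ℝᵏ))`. -/
def VecMemL2C {k : ℕ} (μ : Measure Ω) (F : Filtration ℝ mΩ) (s T : ℝ)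
    (x : ℝ → Ω → Fin k → ℝ) : Prop :=
  (∀ t ∈ Icc s T, ∀ i, Measurable[F t] fun ω => x t ω i) ∧
  (∀ᵐ ω ∂μ, ContinuousOn (fun t => x t ω) (Icc s T)) ∧
  (∫⁻ ω, ⨆ t : Icc s T, ENNReal.ofReal (enorm2 (x t ω)) ∂μ) < ⊤

/-- `η ∈ L²_{𝓕_s}(Ω; ℝᵏ)`. -/
def MemL2Rnd {k : ℕ} (μ : Measure Ω) (F : Filtration ℝ mΩ) (s : ℝ) (η : Ω → Fin k → ℝ) : Prop :=
  (∀ i, Measurable[F s] fun ω => η ω i) ∧ (∫⁻ ω, ENNReal.ofReal (enorm2 (η ω)) ∂μ) < ⊤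

end SLQ
namespace SLQ

variable {Ω : Type} {mΩ : MeasurableSpace Ω}

/-! ### The stochastic linear quadratic problem -/

/-- The state equation `dx = (Ax+Bu)dr + (Cx+Du)dW` on `[s,T]`, `x(s)=η`. -/
def SolvesState {n m : ℕ} (μ : Measure Ω) (F : Filtration ℝ mΩ) (W : ℝ → Ω → ℝ) (s T : ℝ)
    (A : ℝ → Ω → Matrix (Fin n) (Fin n) ℝ) (B : ℝ → Ω → Matrix (Fin n) (Fin m) ℝ)
    (C : ℝ → Ω → Matrix (Fin n) (Fin n) ℝ) (D : ℝ → Ω → Matrix (Fin n) (Fin m) ℝ)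
    (η : Ω → Fin n → ℝ) (u : ℝ → Ω → Fin m → ℝ) (x : ℝ → Ω → Fin n → ℝ) : Prop :=
  SolvesSDE μ F W s T
    (fun r ω => A r ω *ᵥ x r ω + B r ω *ᵥ u r ω)
    (fun r ω => C r ω *ᵥ x r ω + D r ω *ᵥ u r ω) η x

/-- The quadratic cost functional
`J(s,η;u) = ½ E[∫_s^T (⟨Qx,x⟩+⟨Ru,u⟩) dr + ⟨Gx(T),x(T)⟩]`. -/
def cost {n m : ℕ} (μ : Measure Ω) (s T : ℝ)
    (Q : ℝ → Ω → Matrix (Fin n) (Fin n) ℝ) (R : ℝ → Ω → Matrix (Fin m) (Fin m) ℝ)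
    (G : Ω → Matrix (Fin n) (Fin n) ℝ)
    (u : ℝ → Ω → Fin m → ℝ) (x : ℝ → Ω → Fin n → ℝ) : ℝ :=
  (1/2) * ∫ ω, ((∫ r in s..T,
      ((Q r ω *ᵥ x r ω) ⬝ᵥ x r ω + (R r ω *ᵥ u r ω) ⬝ᵥ u r ω))
    + (G ω *ᵥ x T ω) ⬝ᵥ x T ω) ∂μ

/-- Assumption (AS1) on the coefficients of Problem (SLQ). -/
structure AS1 {n m : ℕ} (μ : Measure Ω) (F : Filtration ℝ mΩ) (T : ℝ)
    (A : ℝ → Ω → Matrix (Fin n) (Fin n) ℝ) (B : ℝ → Ω → Matrix (Fin n) (Fin m) ℝ)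
    (C : ℝ → Ω → Matrix (Fin n) (Fin n) ℝ) (D : ℝ → Ω → Matrix (Fin n) (Fin m) ℝ)
    (Q : ℝ → Ω → Matrix (Fin n) (Fin n) ℝ) (R : ℝ → Ω → Matrix (Fin m) (Fin m) ℝ)
    (G : Ω → Matrix (Fin n) (Fin n) ℝ) : Prop where
  hA : MatMemLinfL1 μ F 0 T A
  hB : MatMemLinfL2 μ F 0 T B
  hC : MatMemLinfL2 μ F 0 T C
  hD : MatMemLinfLinf μ F 0 T D
  hQ : MatMemLinfL1 μ F 0 T Q
  hQsymm : ∀ r ω, (Q r ω)ᵀ = Q r ω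
  hR : MatMemLinfLinf μ F 0 T R
  hRsymm : ∀ r ω, (R r ω)ᵀ = R r ω
  hG : ∀ i j, Measurable[F T] fun ω => G ω i j
  hGbdd : ∃ c : ℝ, ∀ᵐ ω ∂μ, frob2 (G ω) ≤ c
  hGsymm : ∀ ω, (G ω)ᵀ = G ω

/-- `Θ` is an optimal feedback operator for Problem (SLQ) on `[0,T]`:
`Θ ∈ L^∞_𝔽(Ω;L²(0,T;ℝ^{m×n}))` and, for every initial pair `(s,η)`, every closed-loop state `x̄`
(which solves the state equation with control `Θx̄`, the latter being admissible) and every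
admissible control `u` with state `x`, one has `J(s,η;Θx̄) ≤ J(s,η;u)`. -/
def IsOptimalFeedback {n m : ℕ} (μ : Measure Ω) (F : Filtration ℝ mΩ) (W : ℝ → Ω → ℝ) (T : ℝ)
    (A : ℝ → Ω → Matrix (Fin n) (Fin n) ℝ) (B : ℝ → Ω → Matrix (Fin n) (Fin m) ℝ)
    (C : ℝ → Ω → Matrix (Fin n) (Fin n) ℝ) (D : ℝ → Ω → Matrix (Fin n) (Fin m) ℝ)
    (Q : ℝ → Ω → Matrix (Fin n) (Fin n) ℝ) (R : ℝ → Ω → Matrix (Fin m) (Fin m) ℝ)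
    (G : Ω → Matrix (Fin n) (Fin n) ℝ)
    (Θ : ℝ → Ω → Matrix (Fin m) (Fin n) ℝ) : Prop :=
  MatMemLinfL2 μ F 0 T Θ ∧
  ∀ s, 0 ≤ s → s < T → ∀ η : Ω → Fin n → ℝ, MemL2Rnd μ F s η →
    ∀ xb : ℝ → Ω → Fin n → ℝ,
      SolvesState μ F W s T A B C D η (fun r ω => Θ r ω *ᵥ xb r ω) xb →
      VecMemL2C μ F s T xb →
      VecMemL2 μ F s T (fun r ω => Θ r ω *ᵥ xb r ω) ∧
      ∀ (u : ℝ → Ω → Fin m → ℝ) (x : ℝ → Ω → Fin n → ℝ),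
        VecMemL2 μ F s T u → SolvesState μ F W s T A B C D η u x → VecMemL2C μ F s T x →
        cost μ s T Q R G (fun r ω => Θ r ω *ᵥ xb r ω) xb ≤ cost μ s T Q R G u x

/-! ### The backward stochastic Riccati equation -/

/-- `N` is the Moore–Penrose pseudo-inverse of `M`. -/
def IsMPInv {k l : ℕ} (M : Matrix (Fin k) (Fin l) ℝ) (N : Matrix (Fin l) (Fin k) ℝ) : Prop :=
  M * N * M = M ∧ N * M * N = N ∧ (M * N)ᵀ = M * N ∧ (N * M)ᵀ = N * M

/-- `K := R + DᵀPD`. -/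
def Kof {n m : ℕ} (D : ℝ → Ω → Matrix (Fin n) (Fin m) ℝ)
    (R : ℝ → Ω → Matrix (Fin m) (Fin m) ℝ) (P : ℝ → Ω → Matrix (Fin n) (Fin n) ℝ)
    (t : ℝ) (ω : Ω) : Matrix (Fin m) (Fin m) ℝ :=
  R t ω + (D t ω)ᵀ * P t ω * D t ω

/-- `L := BᵀP + Dᵀ(PC+Λ)`. -/
def Lof {n m : ℕ} (B : ℝ → Ω → Matrix (Fin n) (Fin m) ℝ)
    (C : ℝ → Ω → Matrix (Fin n) (Fin n) ℝ) (D : ℝ → Ω → Matrix (Fin n) (Fin m) ℝ)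
    (P Λ : ℝ → Ω → Matrix (Fin n) (Fin n) ℝ) (t : ℝ) (ω : Ω) : Matrix (Fin m) (Fin n) ℝ :=
  (B t ω)ᵀ * P t ω + (D t ω)ᵀ * (P t ω * C t ω + Λ t ω)

/-- `(P,Λ)` solves the backward stochastic Riccati equation
`dP = -(PA + AᵀP + ΛC + CᵀΛ + CᵀPC + Q - Lᵀ K† L) dt + Λ dW`, `P(T) = G`,
where `Kd` is a given process substituted for `K†` in the drift. -/
def SolvesRiccatiGen {n m : ℕ} (μ : Measure Ω) (F : Filtration ℝ mΩ) (W : ℝ → Ω → ℝ) (T : ℝ)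
    (A : ℝ → Ω → Matrix (Fin n) (Fin n) ℝ) (B : ℝ → Ω → Matrix (Fin n) (Fin m) ℝ)
    (C : ℝ → Ω → Matrix (Fin n) (Fin n) ℝ) (D : ℝ → Ω → Matrix (Fin n) (Fin m) ℝ)
    (Q : ℝ → Ω → Matrix (Fin n) (Fin n) ℝ) (R : ℝ → Ω → Matrix (Fin m) (Fin m) ℝ)
    (G : Ω → Matrix (Fin n) (Fin n) ℝ)
    (P Λ : ℝ → Ω → Matrix (Fin n) (Fin n) ℝ)
    (Kd : ℝ → Ω → Matrix (Fin m) (Fin m) ℝ) : Prop :=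
  ∃ M : ℝ → Ω → Matrix (Fin n) (Fin n) ℝ,
    (∀ i j, IsItoInt μ F W 0 T (fun t ω => Λ t ω i j) (fun t ω => M t ω i j)) ∧
    (∀ᵐ ω ∂μ, ∀ i j, IntegrableOn (fun r =>
        (P r ω * A r ω + (A r ω)ᵀ * P r ω + Λ r ω * C r ω + (C r ω)ᵀ * Λ r ω
          + (C r ω)ᵀ * P r ω * C r ω + Q r ω
          - (Lof B C D P Λ r ω)ᵀ * Kd r ω * Lof B C D P Λ r ω) i j) (Icc 0 T)) ∧
    ∀ᵐ ω ∂μ, ∀ t ∈ Icc (0:ℝ) T, ∀ i j,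
      P t ω i j = G ω i j
        + (∫ r in t..T,
            (P r ω * A r ω + (A r ω)ᵀ * P r ω + Λ r ω * C r ω + (C r ω)ᵀ * Λ r ω
              + (C r ω)ᵀ * P r ω * C r ω + Q r ω
              - (Lof B C D P Λ r ω)ᵀ * Kd r ω * Lof B C D P Λ r ω) i j)
        - (M T ω i j - M t ω i j)

/-- `(P,Λ)` solves the backward stochastic Riccati equation, with `Kd` being the pointwise
Moore–Penrose pseudo-inverse of `K = R + DᵀPD`. -/
def SolvesRiccati {n m : ℕ} (μ : Measure Ω) (F : Filtration ℝ mΩ) (W : ℝ → Ω → ℝ) (T : ℝ)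
    (A : ℝ → Ω → Matrix (Fin n) (Fin n) ℝ) (B : ℝ → Ω → Matrix (Fin n) (Fin m) ℝ)
    (C : ℝ → Ω → Matrix (Fin n) (Fin n) ℝ) (D : ℝ → Ω → Matrix (Fin n) (Fin m) ℝ)
    (Q : ℝ → Ω → Matrix (Fin n) (Fin n) ℝ) (R : ℝ → Ω → Matrix (Fin m) (Fin m) ℝ)
    (G : Ω → Matrix (Fin n) (Fin n) ℝ)
    (P Λ : ℝ → Ω → Matrix (Fin n) (Fin n) ℝ)
    (Kd : ℝ → Ω → Matrix (Fin m) (Fin m) ℝ) : Prop :=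
  (∀ t ω, IsMPInv (Kof D R P t ω) (Kd t ω)) ∧
  SolvesRiccatiGen μ F W T A B C D Q R G P Λ Kd

/-- The regularity/positivity class in Theorem 5.7-th1: `P ∈ L^∞_𝔽(Ω;C([0,T];S(ℝⁿ)))`,
`Λ ∈ L^p_𝔽(Ω;L²(0,T;S(ℝⁿ)))` for all `p ≥ 1`, `Range K ⊇ Range L` and `K ≥ 0` a.e.,
and `K†L ∈ L^∞_𝔽(Ω;L²(0,T;ℝ^{m×n}))`. -/
def RiccatiClass {n m : ℕ} (μ : Measure Ω) (F : Filtration ℝ mΩ) (T : ℝ)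
    (B : ℝ → Ω → Matrix (Fin n) (Fin m) ℝ)
    (C : ℝ → Ω → Matrix (Fin n) (Fin n) ℝ) (D : ℝ → Ω → Matrix (Fin n) (Fin m) ℝ)
    (R : ℝ → Ω → Matrix (Fin m) (Fin m) ℝ)
    (P Λ : ℝ → Ω → Matrix (Fin n) (Fin n) ℝ)
    (Kd : ℝ → Ω → Matrix (Fin m) (Fin m) ℝ) : Prop :=
  MatMemLinfC μ F 0 T P ∧ (∀ᵐ ω ∂μ, ∀ t ∈ Icc (0:ℝ) T, (P t ω)ᵀ = P t ω) ∧
  MatMemLpAllL2 μ F 0 T Λ ∧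
  (∀ᵐ p ∂(((volume : Measure ℝ).restrict (Icc 0 T)).prod μ), (Λ p.1 p.2)ᵀ = Λ p.1 p.2) ∧
  (∀ᵐ p ∂(((volume : Measure ℝ).restrict (Icc 0 T)).prod μ),
      Set.range (Matrix.mulVec (Lof B C D P Λ p.1 p.2)) ⊆
        Set.range (Matrix.mulVec (Kof D R P p.1 p.2)) ∧
      (Kof D R P p.1 p.2).PosSemidef) ∧
  MatMemLinfL2 μ F 0 T (fun t ω => Kd t ω * Lof B C D P Λ t ω)

end SLQ
namespace SLQ

variable {Ω : Type} {mΩ : MeasurableSpace Ω}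

/-- `φ ∈ L^∞_𝔽(Ω; L¹(a,b; ℝᵏ))` (vector-valued). -/
def VecMemLinfL1 {k : ℕ} (μ : Measure Ω) (F : Filtration ℝ mΩ) (a b : ℝ)
    (φ : ℝ → Ω → Fin k → ℝ) : Prop :=
  (∀ t i, Measurable[F t] fun ω => φ t ω i) ∧
  (∀ i, Measurable fun p : ℝ × Ω => φ p.1 p.2 i) ∧
  ∃ c : ℝ, ∀ᵐ ω ∂μ, IntegrableOn (fun r => Real.sqrt (enorm2 (φ r ω))) (Icc a b) ∧
    (∫ r in a..b, Real.sqrt (enorm2 (φ r ω))) ≤ c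

/-- `y ∈ L^∞_𝔽(Ω; C([a,b]; ℝᵏ))`. -/
def VecMemLinfC {k : ℕ} (μ : Measure Ω) (F : Filtration ℝ mΩ) (a b : ℝ)
    (y : ℝ → Ω → Fin k → ℝ) : Prop :=
  (∀ t ∈ Icc a b, ∀ i, Measurable[F t] fun ω => y t ω i) ∧
  (∀ᵐ ω ∂μ, ContinuousOn (fun t => y t ω) (Icc a b)) ∧
  ∃ c : ℝ, ∀ᵐ ω ∂μ, ∀ t ∈ Icc a b, enorm2 (y t ω) ≤ c

/-- `z ∈ L^p_𝔽(Ω; L²(a,b; ℝᵏ))` for a single exponent `p`. -/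
def VecMemLpL2 {k : ℕ} (μ : Measure Ω) (F : Filtration ℝ mΩ) (a b p : ℝ)
    (z : ℝ → Ω → Fin k → ℝ) : Prop :=
  (∀ t ∈ Icc a b, ∀ i, Measurable[F t] fun ω => z t ω i) ∧
  (∀ i, Measurable fun q : ℝ × Ω => z q.1 q.2 i) ∧
  (∀ᵐ ω ∂μ, IntegrableOn (fun r => enorm2 (z r ω)) (Icc a b)) ∧
  (∫⁻ ω, ENNReal.ofReal ((∫ r in a..b, enorm2 (z r ω)) ^ (p / 2)) ∂μ) < ⊤

/-- `ξ ∈ L^∞_{𝓕_s}(Ω; ℝᵏ)`. -/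
def MemLinfRnd {k : ℕ} (μ : Measure Ω) (F : Filtration ℝ mΩ) (s : ℝ)
    (ξ : Ω → Fin k → ℝ) : Prop :=
  (∀ i, Measurable[F s] fun ω => ξ ω i) ∧ ∃ c : ℝ, ∀ᵐ ω ∂μ, enorm2 (ξ ω) ≤ c

/-- scalar `φ ∈ L^∞_𝔽(Ω; L¹(a,b; ℝ))`. -/
def ScalMemLinfL1 (μ : Measure Ω) (F : Filtration ℝ mΩ) (a b : ℝ) (φ : ℝ → Ω → ℝ) : Prop :=
  (∀ t, Measurable[F t] (φ t)) ∧
  (Measurable fun p : ℝ × Ω => φ p.1 p.2) ∧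
  ∃ c : ℝ, ∀ᵐ ω ∂μ, IntegrableOn (fun r => |φ r ω|) (Icc a b) ∧
    (∫ r in a..b, |φ r ω|) ≤ c

/-- scalar `φ ∈ L^∞_𝔽(Ω; L²(a,b; ℝ))`. -/
def ScalMemLinfL2 (μ : Measure Ω) (F : Filtration ℝ mΩ) (a b : ℝ) (φ : ℝ → Ω → ℝ) : Prop :=
  (∀ t, Measurable[F t] (φ t)) ∧
  (Measurable fun p : ℝ × Ω => φ p.1 p.2) ∧
  ∃ c : ℝ, ∀ᵐ ω ∂μ, IntegrableOn (fun r => (φ r ω) ^ 2) (Icc a b) ∧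
    (∫ r in a..b, (φ r ω) ^ 2) ≤ c

/-- scalar `φ ∈ L^p_𝔽(Ω; L²(a,b; ℝ))` for all `p ≥ 1`. -/
def ScalMemLpAllL2 (μ : Measure Ω) (F : Filtration ℝ mΩ) (a b : ℝ) (φ : ℝ → Ω → ℝ) : Prop :=
  (∀ t, Measurable[F t] (φ t)) ∧
  (Measurable fun p : ℝ × Ω => φ p.1 p.2) ∧
  (∀ᵐ ω ∂μ, IntegrableOn (fun r => (φ r ω) ^ 2) (Icc a b)) ∧
  ∀ p : ℝ, 1 ≤ p →
    (∫⁻ ω, ENNReal.ofReal ((∫ r in a..b, (φ r ω) ^ 2) ^ (p / 2)) ∂μ) < ⊤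

/-- scalar `φ ∈ L^∞_𝔽(Ω; C([a,b]; ℝ))`. -/
def ScalMemLinfC (μ : Measure Ω) (F : Filtration ℝ mΩ) (a b : ℝ) (φ : ℝ → Ω → ℝ) : Prop :=
  (∀ t ∈ Icc a b, Measurable[F t] (φ t)) ∧
  (∀ᵐ ω ∂μ, ContinuousOn (fun t => φ t ω) (Icc a b)) ∧
  ∃ c : ℝ, ∀ᵐ ω ∂μ, ∀ t ∈ Icc a b, |φ t ω| ≤ c

/-- `X ∈ L²_𝔽(Ω; C([s,T]; ℝ^{n×n}))` (columnwise). -/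
def MatMemL2C {n : ℕ} (μ : Measure Ω) (F : Filtration ℝ mΩ) (s T : ℝ)
    (X : ℝ → Ω → Matrix (Fin n) (Fin n) ℝ) : Prop :=
  ∀ j, VecMemL2C μ F s T (fun t ω i => X t ω i j)

/-- `X` solves the linear matrix SDE `dX = 𝒜 X dt + 𝒞 X dW` on `[s,T]`, `X(s) = X₀`
(equivalently, every column of `X` solves the corresponding vector SDE). -/
def SolvesLinMatSDE {n : ℕ} (μ : Measure Ω) (F : Filtration ℝ mΩ) (W : ℝ → Ω → ℝ) (s T : ℝ)
    (𝒜 𝒞 : ℝ → Ω → Matrix (Fin n) (Fin n) ℝ) (X₀ : Matrix (Fin n) (Fin n) ℝ)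
    (X : ℝ → Ω → Matrix (Fin n) (Fin n) ℝ) : Prop :=
  ∀ j, SolvesSDE μ F W s T
    (fun r ω => 𝒜 r ω *ᵥ fun i => X r ω i j)
    (fun r ω => 𝒞 r ω *ᵥ fun i => X r ω i j)
    (fun _ω i => X₀ i j)
    (fun t ω i => X t ω i j)

/-- `(Y,Z)` solves the matrix BSDE `dY = f dt + Z dW` on `[s,T]`, `Y(T) = ξ` (columnwise). -/
def SolvesMatBSDE {n : ℕ} (μ : Measure Ω) (F : Filtration ℝ mΩ) (W : ℝ → Ω → ℝ) (s T : ℝ)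
    (f : ℝ → Ω → Matrix (Fin n) (Fin n) ℝ) (ξ : Ω → Matrix (Fin n) (Fin n) ℝ)
    (Y Z : ℝ → Ω → Matrix (Fin n) (Fin n) ℝ) : Prop :=
  ∀ j, SolvesBSDE μ F W s T
    (fun t ω i => f t ω i j) (fun ω i => ξ ω i j)
    (fun t ω i => Y t ω i j) (fun t ω i => Z t ω i j)

/-- `(P,Λ)` solves the scalar Riccati equation
`dP = (R+P)⁻¹ Λ² dt + Λ dW` on `[0,T]`, `P(T) = G`. -/
def SolvesScalarRiccati (μ : Measure Ω) (F : Filtration ℝ mΩ) (W : ℝ → Ω → ℝ) (T : ℝ)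
    (Rv : ℝ) (G : Ω → ℝ) (P Λ : ℝ → Ω → ℝ) : Prop :=
  (∀ t ∈ Icc (0:ℝ) T, Measurable[F t] (P t)) ∧
  (∀ᵐ ω ∂μ, ContinuousOn (fun t => P t ω) (Icc 0 T)) ∧
  (∀ᵐ ω ∂μ, IntegrableOn (fun r => (Rv + P r ω)⁻¹ * (Λ r ω) ^ 2) (Icc 0 T)) ∧
  ∃ M : ℝ → Ω → ℝ, IsItoInt μ F W 0 T Λ M ∧
    ∀ᵐ ω ∂μ, ∀ t ∈ Icc (0:ℝ) T,
      P t ω = G ω - (∫ r in t..T, (Rv + P r ω)⁻¹ * (Λ r ω) ^ 2) - (M T ω - M t ω)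

end SLQ
namespace SLQ

/-- Joint measurability on `ℝ × Ω` is glued from the pieces `Iic n × Ω`, `n : ℕ`. -/
lemma measurable_uncurry_of_isStronglyProgressive {Ω : Type} {mΩ : MeasurableSpace Ω}
    {F : Filtration ℝ mΩ} {u : ℝ → Ω → ℝ} (hu : IsStronglyProgressive F u) :
    Measurable fun p : ℝ × Ω => u p.1 p.2 := by
  have hpiece : ∀ n : ℕ, Measurable fun p : Iic (n : ℝ) × Ω => u p.1 p.2 := fun n =>
    (hu n).measurable.mono (sup_le_sup le_rfl (MeasurableSpace.comap_mono (F.le n))) le_rfl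
  intro s hs
  have hcover : (fun p : ℝ × Ω => u p.1 p.2) ⁻¹' s = ⋃ n : ℕ,
      (fun p : Iic (n : ℝ) × Ω => ((p.1 : ℝ), p.2)) ''
        ((fun p : Iic (n : ℝ) × Ω => u p.1 p.2) ⁻¹' s) := by
    ext ⟨t, ω⟩
    simp only [mem_preimage, mem_iUnion, mem_image, Prod.exists, Prod.mk.injEq]
    constructor
    · intro h
      obtain ⟨n, hn⟩ := exists_nat_ge t
      exact ⟨n, ⟨t, hn⟩, ω, h, rfl, rfl⟩
    · rintro ⟨n, t', ω', h, rfl, rfl⟩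
      exact h
  rw [hcover]
  exact MeasurableSet.iUnion fun n =>
    ((MeasurableEmbedding.subtype_coe measurableSet_Iic).prodMap
      MeasurableEmbedding.id).measurableSet_image.2 (hpiece n hs)

lemma abs_quadForm_le {m : ℕ} {c : ℝ} (M : Matrix (Fin m) (Fin m) ℝ) (hM : frob2 M ≤ c)
    (q : Fin m → ℝ) : |(M *ᵥ q) ⬝ᵥ q| ≤ ∑ i, ∑ j, (1 + c) * |q j| * |q i| := by
  have hentry : ∀ i j, |M i j| ≤ 1 + c := by
    intro i j
    have h1 : (M i j) ^ 2 ≤ frob2 M :=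
      (Finset.single_le_sum (f := fun j => (M i j) ^ 2) (fun _ _ => sq_nonneg _)
        (Finset.mem_univ j)).trans
        (Finset.single_le_sum (f := fun i => ∑ j, (M i j) ^ 2)
          (fun _ _ => Finset.sum_nonneg fun _ _ => sq_nonneg _) (Finset.mem_univ i))
    rw [abs_le]
    constructor <;> nlinarith [sq_nonneg (M i j - 1), sq_nonneg (M i j + 1)]
  simp only [dotProduct, mulVec, Finset.sum_mul]
  refine (Finset.abs_sum_le_sum_abs _ _).trans (Finset.sum_le_sum fun i _ => ?_)
  refine (Finset.abs_sum_le_sum_abs _ _).trans (Finset.sum_le_sum fun j _ => ?_)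
  rw [abs_mul, abs_mul]
  gcongr
  exact hentry i j

lemma posSemidef_of_rat {m : ℕ} {M : Matrix (Fin m) (Fin m) ℝ} (hM : Mᵀ = M)
    (h : ∀ q : Fin m → ℚ, 0 ≤ (M *ᵥ fun i => (q i : ℝ)) ⬝ᵥ fun i => (q i : ℝ)) :
    M.PosSemidef := by
  refine .of_dotProduct_mulVec_nonneg ((conjTranspose_eq_transpose_of_trivial M).trans hM) fun x => ?_
  have hdense : DenseRange (Pi.map fun (_ : Fin m) (q : ℚ) => (q : ℝ)) :=
    DenseRange.piMap fun _ => Rat.denseRange_cast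
  have hclosed : IsClosed {x : Fin m → ℝ | 0 ≤ (M *ᵥ x) ⬝ᵥ x} :=
    isClosed_le continuous_const (by fun_prop)
  have hx : 0 ≤ (M *ᵥ x) ⬝ᵥ x :=
    hdense.induction_on (p := fun x => 0 ≤ (M *ᵥ x) ⬝ᵥ x) x hclosed h
  rwa [star_trivial, dotProduct_comm]

/-- Testing the positivity hypothesis with `v = q` on `{⟨K q, q⟩ < 0}` and `v = 0` elsewhere. -/
lemma ae_quadForm_nonneg {Ω : Type} {mΩ : MeasurableSpace Ω} (μ : Measure Ω)
    [IsProbabilityMeasure μ] (F : Filtration ℝ mΩ) {m : ℕ} (T : ℝ) (hT : 0 < T)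
    (K : ℝ → Ω → Matrix (Fin m) (Fin m) ℝ)
    (hbdd : ∃ c : ℝ, ∀ t ω, frob2 (K t ω) ≤ c)
    (hprog : ∀ i j, IsStronglyProgressive F fun t ω => K t ω i j)
    (hpos : ∀ v : ℝ → Ω → Fin m → ℝ, VecMemL2 μ F 0 T v →
      0 ≤ ∫ ω, (∫ r in (0:ℝ)..T, (K r ω *ᵥ v r ω) ⬝ᵥ v r ω) ∂μ) (q : Fin m → ℝ) :
    ∀ᵐ p ∂(((volume : Measure ℝ).restrict (Icc 0 T)).prod μ),
      0 ≤ (K p.1 p.2 *ᵥ q) ⬝ᵥ q := by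
  obtain ⟨c, hc⟩ := hbdd
  set g : ℝ → Ω → ℝ := fun t ω => (K t ω *ᵥ q) ⬝ᵥ q with hg
  have hg_adapted : ∀ t, Measurable[F t] (g t) := by
    intro t
    simp only [hg, dotProduct, mulVec]
    exact Finset.measurable_sum _ fun i _ => (Finset.measurable_sum _ fun j _ =>
      ((hprog i j).stronglyAdapted t).measurable.mul_const _).mul_const _
  have hg_joint : Measurable fun p : ℝ × Ω => g p.1 p.2 := by
    simp only [hg, dotProduct, mulVec]
    exact Finset.measurable_sum _ fun i _ => (Finset.measurable_sum _ fun j _ =>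
      (measurable_uncurry_of_isStronglyProgressive (hprog i j)).mul_const _).mul_const _
  let v : ℝ → Ω → Fin m → ℝ := fun t ω => if g t ω < 0 then q else 0
  have hv : VecMemL2 μ F 0 T v := by
    refine ⟨fun t i => ?_, fun i => ?_, ?_⟩
    · have : (fun ω => v t ω i) = fun ω => if g t ω < 0 then q i else 0 := by
        ext ω; simp only [v]; split_ifs <;> rfl
      rw [this]
      exact Measurable.ite (measurableSet_lt (hg_adapted t) measurable_const)
        measurable_const measurable_const
    · have : (fun p : ℝ × Ω => v p.1 p.2 i) = fun p => if g p.1 p.2 < 0 then q i else 0 := by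
        ext p; simp only [v]; split_ifs <;> rfl
      rw [this]
      exact Measurable.ite (measurableSet_lt hg_joint measurable_const)
        measurable_const measurable_const
    · have hle : ∀ p : ℝ × Ω,
          ENNReal.ofReal (enorm2 (v p.1 p.2)) ≤ ENNReal.ofReal (enorm2 q) := by
        intro p
        refine ENNReal.ofReal_le_ofReal ?_
        simp only [v]
        split_ifs
        · exact le_rfl
        · simpa [enorm2] using Finset.sum_nonneg fun i _ => sq_nonneg (q i)
      refine (lintegral_mono hle).trans_lt ?_
      rw [lintegral_const]
      exact ENNReal.mul_lt_top ENNReal.ofReal_lt_top (measure_lt_top _ _)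
  have hform : ∀ t ω, (K t ω *ᵥ v t ω) ⬝ᵥ v t ω = min (g t ω) 0 := by
    intro t ω
    simp only [v]
    split_ifs with h
    · exact (min_eq_left h.le).symm
    · rw [min_eq_right (not_lt.1 h)]; simp
  have hint : Integrable (fun p : ℝ × Ω => min (g p.1 p.2) 0)
      (((volume : Measure ℝ).restrict (Icc 0 T)).prod μ) := by
    refine Integrable.of_bound (hg_joint.min measurable_const).aestronglyMeasurable
      (∑ i, ∑ j, (1 + c) * |q j| * |q i|) (Eventually.of_forall fun p => ?_)
    have h1 := abs_quadForm_le (K p.1 p.2) (hc _ _) q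
    refine le_trans ?_ h1
    rw [Real.norm_eq_abs]
    rcases min_cases (g p.1 p.2) 0 with h | h
    · rw [h.1]
    · rw [h.1, abs_zero]; exact abs_nonneg _
  have hnonneg : 0 ≤ ∫ p, min (g p.1 p.2) 0 ∂(((volume : Measure ℝ).restrict (Icc 0 T)).prod μ) := by
    have h := hpos v hv
    simp only [hform, intervalIntegral.integral_of_le hT.le, ← integral_Icc_eq_integral_Ioc] at h
    rwa [integral_prod_symm _ hint]
  have hzero : (fun p : ℝ × Ω => -min (g p.1 p.2) 0)
      =ᵐ[((volume : Measure ℝ).restrict (Icc 0 T)).prod μ] 0 := by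
    refine (integral_eq_zero_iff_of_nonneg (fun p => ?_) hint.neg).1 (le_antisymm ?_ ?_)
    · exact neg_nonneg.2 (min_le_right _ _)
    · rw [integral_neg']; linarith
    · exact integral_nonneg fun p => neg_nonneg.2 (min_le_right _ _)
  filter_upwards [hzero] with p hp
  exact min_eq_right_iff.1 (neg_eq_zero.1 hp)

/-- If `K` is a bounded, progressively measurable, symmetric-matrix-valued process such that
`E∫_0^T ⟨K v, v⟩ dr ≥ 0` for every `v ∈ L²_𝔽(0,T;ℝᵐ)`, then `K(t,ω) ≥ 0` for a.e. `(t,ω)`. -/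
theorem stmt14 {Ω : Type} {mΩ : MeasurableSpace Ω} (μ : Measure Ω) [IsProbabilityMeasure μ]
    (F : Filtration ℝ mΩ) {m : ℕ} (T : ℝ) (hT : 0 < T)
    (K : ℝ → Ω → Matrix (Fin m) (Fin m) ℝ)
    (hsymm : ∀ t ω, (K t ω)ᵀ = K t ω)
    (hbdd : ∃ c : ℝ, ∀ t ω, frob2 (K t ω) ≤ c)
    (hprog : ∀ i j, ProgMeasurable F fun t ω => K t ω i j)
    (hpos : ∀ v : ℝ → Ω → Fin m → ℝ, VecMemL2 μ F 0 T v →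
      0 ≤ ∫ ω, (∫ r in (0:ℝ)..T, (K r ω *ᵥ v r ω) ⬝ᵥ v r ω) ∂μ) :
    ∀ᵐ p ∂(((volume : Measure ℝ).restrict (Icc 0 T)).prod μ),
      (K p.1 p.2).PosSemidef := by
  have h : ∀ᵐ p ∂(((volume : Measure ℝ).restrict (Icc 0 T)).prod μ), ∀ q : Fin m → ℚ,
      0 ≤ (K p.1 p.2 *ᵥ fun i => (q i : ℝ)) ⬝ᵥ fun i => (q i : ℝ) :=
    ae_all_iff.2 fun q => ae_quadForm_nonneg μ F T hT K hbdd hprog hpos _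
  filter_upwards [h] with p hp
  exact posSemidef_of_rat (hsymm _ _) hp

end SLQ
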